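/- Let f be a meromorphic function on ℂ with f(0) ≠ 0, ∞, let c ∈ ℂ, r ≥ 1 and s > r + |c|. Then (1/2π) ∫₀^{2π} | (1/2π) ∫₀^{2π} log|f(se^{iθ})| · Re( 2 c s e^{iθ} / ( (se^{iθ} − re^{iφ} − c)(se^{iθ} − re^{iφ}) ) ) dθ | dφ ≤ ( 4|c|s / (s − r − |c|)² ) · ( T(s, f) + log⁺(1/|f(0)|) ). -/

import Mathlib

open MeasureTheory Filter Topology Metric

noncomputable section

/-- Positive part of the logarithm: `log⁺ x = max (log x) 0`. -/
def logPlus (x : ℝ) : ℝ := max (Real.log x) 0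

/-- The point `r e^{iθ}` on the circle of radius `r`. -/
def circ (r θ : ℝ) : ℂ := (r : ℂ) * Complex.exp (θ * Complex.I)

/-- Nevanlinna proximity function `m(r, f)`. -/
def nevm (f : ℂ → ℂ) (r : ℝ) : ℝ :=
  (2 * Real.pi)⁻¹ * ∫ θ in (0:ℝ)..(2 * Real.pi), logPlus ‖f (circ r θ)‖

/-- Order of the pole of `f` at `x` (`0` if `f` extends analytically over `x`);
determined through the punctured neighbourhood of `x`. -/
def poleOrd (f : ℂ → ℂ) (x : ℂ) : ℕ :=
  sInf {n : ℕ | ∃ g : ℂ → ℂ, AnalyticAt ℂ g x ∧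
    ∀ᶠ w in 𝓝[≠] x, (w - x) ^ n * f w = g w}

/-- Unintegrated counting function `n(r, f)`: number of poles of `f` in `|z| ≤ r`,
counted with multiplicity. -/
def nevn (f : ℂ → ℂ) (r : ℝ) : ℕ := ∑ᶠ z ∈ closedBall (0:ℂ) r, poleOrd f z

/-- Integrated counting function `N(r, f)`. -/
def nevN (f : ℂ → ℂ) (r : ℝ) : ℝ :=
  (∫ t in (0:ℝ)..r, ((nevn f t : ℝ) - (nevn f 0 : ℝ)) / t) + (nevn f 0 : ℝ) * Real.log r

/-- Nevanlinna characteristic `T(r, f) = m(r, f) + N(r, f)`. -/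
def nevT (f : ℂ → ℂ) (r : ℝ) : ℝ := nevm f r + nevN f r

/-- A subset of `(0, ∞)` has finite logarithmic measure: `∫_E dr/r < ∞`. -/
def FinLogMeasure (E : Set ℝ) : Prop :=
  E ⊆ Set.Ioi 0 ∧ ∫⁻ r in E, ENNReal.ofReal r⁻¹ < ⊤

/-- `f` is a non-constant function. -/
def Nonconstant (f : ℂ → ℂ) : Prop := ¬ ∃ a : ℂ, ∀ z : ℂ, f z = a

/-- `f` has finite order: `limsup_{r→∞} log T(r,f) / log r < ∞`. -/
def FiniteOrder (f : ℂ → ℂ) : Prop :=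
  IsBoundedUnder (· ≤ ·) atTop fun r : ℝ => Real.log (nevT f r) / Real.log r

end

/-!
Since `|log x| = 2 log⁺ x - log x`, Jensen's formula evaluates the mean of `|log |f||` over
`|z| = s`, and dropping the contribution of the zeros of `f` bounds it by
`2 (T(s, f) + log⁺ (1 / |f 0|))`. On that circle the kernel of `S₁` at `w` is at most
`2 |c| s / (s - |w| - |c|)²`, which bounds `|S₁(w)|` uniformly on `|w| = r`, hence also its mean.
-/

lemma poleOrd_eq_toNat_neg_meromorphicOrderAt {f : ℂ → ℂ} {x : ℂ} (hf : MeromorphicAt f x) :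
    poleOrd f x = (-(meromorphicOrderAt f x).untop₀).toNat := by
  have hadmissible (n : ℕ) : (∃ g : ℂ → ℂ, AnalyticAt ℂ g x ∧
      ∀ᶠ w in 𝓝[≠] x, (w - x) ^ n * f w = g w) ↔ 0 ≤ n + meromorphicOrderAt f x := by
    have hpow : MeromorphicAt (fun w : ℂ ↦ (w - x) ^ n) x := by fun_prop
    rw [← fun_meromorphicOrderAt_pow_id_sub_const (𝕜 := ℂ) (x := x),
      ← fun_meromorphicOrderAt_mul hpow hf, (hpow.fun_mul hf).meromorphicOrderAt_nonneg_iff]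
    rfl
  simp only [poleOrd, hadmissible]
  cases meromorphicOrderAt f x with
  | top => simp
  | coe k =>
    have hset : {n : ℕ | (0 : WithTop ℤ) ≤ n + k} = Set.Ici (-k).toNat := by
      ext n
      have : (0 : WithTop ℤ) ≤ n + k ↔ 0 ≤ n + k := by norm_cast
      simp only [Set.mem_ofPred_eq, Set.mem_Ici, this]
      omega
    rw [hset, csInf_Ici, WithTop.untop₀_coe]

lemma poleOrd_eq_toNat_neg_divisor {f : ℂ → ℂ} {K : Set ℂ} (hf : MeromorphicOn f K) {z : ℂ}
    (hz : z ∈ K) : poleOrd f z = (-MeromorphicOn.divisor f K z).toNat := by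
  rw [poleOrd_eq_toNat_neg_meromorphicOrderAt (hf z hz), MeromorphicOn.divisor_apply hf hz]

lemma poleOrd_eq_zero_of_analyticAt {f : ℂ → ℂ} {x : ℂ} (hf : AnalyticAt ℂ f x) :
    poleOrd f x = 0 := by
  simp [poleOrd_eq_toNat_neg_meromorphicOrderAt hf.meromorphicAt, hf.meromorphicOrderAt_nonneg]

lemma finite_inter_support_poleOrd {f : ℂ → ℂ} {K : Set ℂ} (hK : IsCompact K)
    (hf : MeromorphicOn f K) : (K ∩ Function.support (poleOrd f)).Finite := by
  refine ((MeromorphicOn.divisor f K).finiteSupport hK).subset fun z ⟨hzK, hz⟩ hdiv ↦ hz ?_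
  simp [poleOrd_eq_toNat_neg_divisor hf hzK, hdiv]

lemma nevn_zero_of_analyticAt {f : ℂ → ℂ} (h0 : AnalyticAt ℂ f 0) : nevn f 0 = 0 := by
  simp [nevn, poleOrd_eq_zero_of_analyticAt h0]

lemma nevN_nonneg_of_analyticAt {f : ℂ → ℂ} (h0 : AnalyticAt ℂ f 0) {s : ℝ} (hs : 0 ≤ s) :
    0 ≤ nevN f s := by
  simp only [nevN, nevn_zero_of_analyticAt h0, Nat.cast_zero, sub_zero, zero_mul, add_zero]
  exact intervalIntegral.integral_nonneg hs fun t ht ↦ div_nonneg (Nat.cast_nonneg _) ht.1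

lemma intervalIntegrable_indicator_Ici_inv {a : ℝ} (ha : 0 < a) (b s : ℝ) :
    IntervalIntegrable ((Set.Ici a).indicator fun t ↦ t⁻¹) volume b s := by
  have hcont : ContinuousOn (fun t : ℝ ↦ t⁻¹) (Set.Icc a (max b s)) :=
    continuousOn_inv₀.mono fun t ht ↦ (ha.trans_le ht.1).ne'
  rw [intervalIntegrable_iff, IntegrableOn, integrable_indicator_iff measurableSet_Ici,
    IntegrableOn, Measure.restrict_restrict measurableSet_Ici]
  exact hcont.integrableOn_Icc.mono_set fun t ht ↦ ⟨ht.1, ht.2.2⟩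

lemma integral_indicator_Ici_inv {a s : ℝ} (ha : 0 < a) (has : a ≤ s) :
    ∫ t in (0:ℝ)..s, (Set.Ici a).indicator (fun t ↦ t⁻¹) t = Real.log (s / a) := by
  have hset : Set.Ioc 0 s ∩ Set.Ici a = Set.Icc a s := by
    ext t
    simp only [Set.mem_inter_iff, Set.mem_Ioc, Set.mem_Ici, Set.mem_Icc]
    grind
  rw [intervalIntegral.integral_of_le (ha.le.trans has), setIntegral_indicator measurableSet_Ici,
    hset, integral_Icc_eq_integral_Ioc, ← intervalIntegral.integral_of_le has,
    integral_inv_of_pos ha (ha.trans_le has)]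

section RadialCounting

variable {E : Type*} [SeminormedAddCommGroup E] {w : E → ℝ} {s t : ℝ}

lemma finsum_closedBall_sub_finsum_closedBall_zero
    (hw : (closedBall (0 : E) s ∩ Function.support w).Finite) (ht : 0 ≤ t) (hts : t ≤ s) :
    (∑ᶠ z ∈ closedBall 0 t, w z) - ∑ᶠ z ∈ closedBall 0 0, w z =
      ∑ z ∈ hw.toFinset with 0 < ‖z‖, if ‖z‖ ≤ t then w z else 0 := by
  have hfin : (closedBall (0 : E) t ∩ Function.support w).Finite :=
    hw.subset (Set.inter_subset_inter_left _ (closedBall_subset_closedBall hts))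
  rw [← finsum_mem_add_sdiff' (closedBall_subset_closedBall ht) hfin, add_sub_cancel_left,
    ← Finset.sum_filter]
  refine finsum_mem_eq_sum_of_subset _ (fun z ⟨⟨hzt, hz0⟩, hwz⟩ ↦ ?_) fun z hz ↦ ?_
  · simp only [mem_closedBall_zero_iff, not_le] at hzt hz0
    simpa [hz0, hzt, hzt.trans hts] using hwz
  · simp_all

/-- Terms with `‖z‖ = 0` on the right vanish, since then `log (s / ‖z‖) = log (s / 0) = 0`. -/
lemma integral_finsum_closedBall_sub_div (hs : 0 ≤ s)
    (hw : (closedBall (0 : E) s ∩ Function.support w).Finite) :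
    ∫ t in (0:ℝ)..s, ((∑ᶠ z ∈ closedBall 0 t, w z) - ∑ᶠ z ∈ closedBall 0 0, w z) / t =
      ∑ᶠ z ∈ closedBall 0 s, w z * Real.log (s / ‖z‖) := by
  have hmem {z : E} (hz : z ∈ hw.toFinset.filter (0 < ‖·‖)) : 0 < ‖z‖ ∧ ‖z‖ ≤ s := by
    simp_all
  calc
    _ = ∫ t in (0:ℝ)..s, ∑ z ∈ hw.toFinset with 0 < ‖z‖,
          w z * (Set.Ici ‖z‖).indicator (fun t ↦ t⁻¹) t := by
      refine intervalIntegral.integral_congr fun t ht ↦ ?_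
      rw [Set.uIcc_of_le hs] at ht
      rw [finsum_closedBall_sub_finsum_closedBall_zero hw ht.1 ht.2, Finset.sum_div]
      simp only [Set.indicator_apply, Set.mem_Ici, div_eq_mul_inv, ite_mul, mul_ite, zero_mul,
        mul_zero]
    _ = ∑ z ∈ hw.toFinset with 0 < ‖z‖, w z * Real.log (s / ‖z‖) := by
      rw [intervalIntegral.integral_finsetSum fun z hz ↦
        (intervalIntegrable_indicator_Ici_inv (hmem hz).1 0 s).const_mul (w z)]
      refine Finset.sum_congr rfl fun z hz ↦ ?_
      rw [intervalIntegral.integral_const_mul, integral_indicator_Ici_inv (hmem hz).1 (hmem hz).2]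
    _ = _ := by
      refine (finsum_mem_eq_sum_of_subset _ (fun z hz ↦ ?_) fun z hz ↦ ?_).symm
      · have hpos : 0 < ‖z‖ := (norm_nonneg z).lt_of_ne' fun h ↦ hz.2 (by simp [h])
        have hzs : ‖z‖ ≤ s := by simpa using hz.1
        simpa [hpos, hzs] using left_ne_zero_of_mul hz.2
      · simpa using (hmem hz).2

end RadialCounting

lemma nevN_eq_finsum {f : ℂ → ℂ} {s : ℝ} (hs : 0 ≤ s) (hf : MeromorphicOn f (closedBall 0 s)) :
    nevN f s = ∑ᶠ z ∈ closedBall (0 : ℂ) s, poleOrd f z * Real.log (s / ‖z‖) +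
      nevn f 0 * Real.log s := by
  have hsupp : Function.support (fun z ↦ (poleOrd f z : ℝ)) = Function.support (poleOrd f) := by
    ext; simp
  have hfin := finite_inter_support_poleOrd (isCompact_closedBall 0 s) hf
  have hcast {t : ℝ} (ht : t ≤ s) :
      (nevn f t : ℝ) = ∑ᶠ z ∈ closedBall 0 t, (poleOrd f z : ℝ) :=
    (Nat.castAddMonoidHom ℝ).map_finsum_mem'
      (hfin.subset (Set.inter_subset_inter_left _ (closedBall_subset_closedBall ht)))
  rw [nevN, ← integral_finsum_closedBall_sub_div hs (by rwa [hsupp])]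
  congr 1
  refine intervalIntegral.integral_congr fun t ht ↦ ?_
  rw [Set.uIcc_of_le hs] at ht
  simp only [hcast ht.2, hcast hs]

lemma neg_finsum_poleOrd_mul_log_le {f : ℂ → ℂ} {s : ℝ} (hf : MeromorphicOn f (closedBall 0 s)) :
    -∑ᶠ z ∈ closedBall (0 : ℂ) s, poleOrd f z * Real.log (s / ‖z‖) ≤
      ∑ᶠ z, MeromorphicOn.divisor f (closedBall 0 s) z * Real.log (s / ‖z‖) := by
  have hK : IsCompact (closedBall (0 : ℂ) s) := isCompact_closedBall 0 s
  rw [finsum_mem_def, ← finsum_neg_distrib]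
  refine finsum_le_finsum' ?_ ?_ fun z ↦ ?_
  · refine (finite_inter_support_poleOrd hK hf).subset fun z hz ↦ ?_
    simp_all
  · refine ((MeromorphicOn.divisor f (closedBall 0 s)).finiteSupport hK).subset fun z hz ↦ ?_
    simp_all
  by_cases hz : z ∈ closedBall 0 s
  · have hlog : 0 ≤ Real.log (s / ‖z‖) := by
      rcases (norm_nonneg z).eq_or_lt with h | h
      · simp [← h]
      · exact Real.log_nonneg ((one_le_div h).2 (by simpa using hz))
    have hord : -(poleOrd f z : ℝ) ≤ MeromorphicOn.divisor f (closedBall 0 s) z := by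
      rw [poleOrd_eq_toNat_neg_divisor hf hz]
      exact_mod_cast (by lia)
    rw [Set.indicator_of_mem hz, ← neg_mul]
    gcongr
  · simp [hz]

lemma log_norm_sub_nevN_le_circleAverage {f : ℂ → ℂ} {s : ℝ} (hs : 0 < s)
    (hf : MeromorphicOn f (closedBall 0 s)) (h0 : AnalyticAt ℂ f 0) (hf0 : f 0 ≠ 0) :
    Real.log ‖f 0‖ - nevN f s ≤ Real.circleAverage (Real.log ‖f ·‖) 0 s := by
  have hdiv0 : MeromorphicOn.divisor f (closedBall 0 s) 0 = 0 := by
    rw [MeromorphicOn.divisor_apply hf (mem_closedBall_self hs.le),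
      h0.meromorphicNFAt.meromorphicOrderAt_eq_zero_iff.2 hf0, WithTop.untop₀_zero]
  have hjensen := MeromorphicOn.circleAverage_log_norm hs.ne' (by rwa [abs_of_pos hs])
  rw [abs_of_pos hs, hdiv0, h0.meromorphicTrailingCoeffAt_of_ne_zero hf0] at hjensen
  simp only [zero_sub, norm_neg, ← div_eq_mul_inv, Int.cast_zero, zero_mul, add_zero] at hjensen
  rw [hjensen, nevN_eq_finsum hs.le hf, nevn_zero_of_analyticAt h0, Nat.cast_zero, zero_mul,
    add_zero]
  linarith [neg_finsum_poleOrd_mul_log_le hf]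

lemma circ_eq_circleMap (r θ : ℝ) : circ r θ = circleMap 0 r θ := by
  rw [circ, circleMap_zero]

lemma logPlus_eq_posLog (x : ℝ) : logPlus x = Real.posLog x := max_comm _ _

lemma nevm_eq_circleAverage (f : ℂ → ℂ) (s : ℝ) :
    nevm f s = Real.circleAverage (fun z ↦ Real.posLog ‖f z‖) 0 s := by
  simp only [nevm, Real.circleAverage_def, circ_eq_circleMap, logPlus_eq_posLog, smul_eq_mul]

lemma circleAverage_abs_log_norm_le {f : ℂ → ℂ} {s : ℝ} (hs : 0 < s)
    (hf : MeromorphicOn f (closedBall 0 s)) (h0 : AnalyticAt ℂ f 0) (hf0 : f 0 ≠ 0) :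
    Real.circleAverage (fun z ↦ |Real.log ‖f z‖|) 0 s ≤
      2 * (nevT f s + logPlus (1 / ‖f 0‖)) := by
  have hsphere : MeromorphicOn f (sphere 0 |s|) := by
    rw [abs_of_pos hs]; exact hf.mono_set sphere_subset_closedBall
  have habs : Real.circleAverage (fun z ↦ |Real.log ‖f z‖|) 0 s =
      2 * nevm f s - Real.circleAverage (Real.log ‖f ·‖) 0 s := by
    have habs_log (z : ℂ) : |Real.log ‖f z‖| = (2 : ℝ) • Real.posLog ‖f z‖ - Real.log ‖f z‖ := by
      rw [← Real.half_mul_log_add_log_abs, smul_eq_mul]; ring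
    simp only [habs_log]
    rw [Real.circleAverage_fun_sub hsphere.circleIntegrable_posLog_norm.const_fun_smul
      hsphere.circleIntegrable_log_norm, Real.circleAverage_fun_smul, nevm_eq_circleAverage,
      smul_eq_mul]
  have hjensen := log_norm_sub_nevN_le_circleAverage hs hf h0 hf0
  have hN := nevN_nonneg_of_analyticAt h0 hs.le
  have hlog : -Real.log ‖f 0‖ ≤ logPlus (1 / ‖f 0‖) := by
    rw [one_div, ← Real.log_inv]; exact le_max_left _ _
  have hlogPlus : 0 ≤ logPlus (1 / ‖f 0‖) := le_max_right _ _
  rw [habs, nevT]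
  linarith

lemma norm_div_sub_sub_mul_sub_le {𝕜 : Type*} [NormedDivisionRing 𝕜] {z w c : 𝕜}
    (h : ‖w‖ + ‖c‖ < ‖z‖) (a : 𝕜) :
    ‖a / ((z - w - c) * (z - w))‖ ≤ ‖a‖ / (‖z‖ - ‖w‖ - ‖c‖) ^ 2 := by
  have hpos : 0 < ‖z‖ - ‖w‖ - ‖c‖ := by linarith
  have hzw : ‖z‖ - ‖w‖ ≤ ‖z - w‖ := norm_sub_norm_le z w
  have hzw' : ‖z‖ - ‖w‖ - ‖c‖ ≤ ‖z - w‖ := by linarith [norm_nonneg c]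
  have hzwc : ‖z‖ - ‖w‖ - ‖c‖ ≤ ‖z - w - c‖ := by linarith [norm_sub_norm_le (z - w) c]
  rw [norm_div, norm_mul, sq]
  gcongr

lemma abs_circleAverage_mul_le {g k : ℂ → ℝ} {c : ℂ} {R C : ℝ} (hg : CircleIntegrable g c R)
    (hk : ∀ z ∈ sphere c |R|, |k z| ≤ C) :
    |Real.circleAverage (fun z ↦ g z * k z) c R| ≤
      C * Real.circleAverage (fun z ↦ |g z|) c R := by
  have hint : IntervalIntegrable (fun θ ↦ C * |g (circleMap c R θ)|) volume 0 (2 * Real.pi) :=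
    IntervalIntegrable.const_mul hg.abs C
  have hpoint (θ : ℝ) : ‖g (circleMap c R θ) * k (circleMap c R θ)‖ ≤
      C * |g (circleMap c R θ)| := by
    rw [norm_mul, mul_comm, Real.norm_eq_abs, Real.norm_eq_abs]
    gcongr
    exact hk _ (circleMap_mem_sphere' c R θ)
  rw [← smul_eq_mul C, ← Real.circleAverage_fun_smul, Real.circleAverage_def,
    Real.circleAverage_def, ← Real.norm_eq_abs,
    norm_smul_of_nonneg (inv_nonneg.2 Real.two_pi_pos.le)]
  refine mul_le_mul_of_nonneg_left ?_ (inv_nonneg.2 Real.two_pi_pos.le)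
  exact intervalIntegral.norm_integral_le_of_norm_le Real.two_pi_pos.le
    (Eventually.of_forall fun θ _ ↦ hpoint θ) hint

/-- The term `S₁(w)` of the difference `log |f (w + c)| - log |f w|` when both logarithms are
expanded by the Poisson–Jensen formula on the disc of radius `s`. -/
noncomputable def S1Term (f : ℂ → ℂ) (c : ℂ) (s : ℝ) (w : ℂ) : ℝ :=
  Real.circleAverage
    (fun z ↦ Real.log ‖f z‖ * (2 * c * z / ((z - w - c) * (z - w))).re) 0 s

lemma abs_S1Term_le {f : ℂ → ℂ} {c w : ℂ} {s : ℝ} (hf : MeromorphicOn f (closedBall 0 s))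
    (h0 : AnalyticAt ℂ f 0) (hf0 : f 0 ≠ 0) (hs : ‖w‖ + ‖c‖ < s) :
    |S1Term f c s w| ≤
      4 * ‖c‖ * s / (s - ‖w‖ - ‖c‖) ^ 2 * (nevT f s + logPlus (1 / ‖f 0‖)) := by
  have hs0 : 0 < s := by linarith [norm_nonneg w, norm_nonneg c]
  have hint : CircleIntegrable (Real.log ‖f ·‖) 0 s :=
    (hf.mono_set sphere_subset_closedBall).circleIntegrable_log_norm_of_nonneg hs0.le
  have hkernel : ∀ z ∈ sphere (0 : ℂ) |s|, |(2 * c * z / ((z - w - c) * (z - w))).re| ≤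
      2 * ‖c‖ * s / (s - ‖w‖ - ‖c‖) ^ 2 := by
    intro z hz
    obtain rfl : ‖z‖ = s := by simpa [abs_of_pos hs0] using hz
    simpa using (Complex.abs_re_le_norm _).trans (norm_div_sub_sub_mul_sub_le hs (2 * c * z))
  calc
    |S1Term f c s w| ≤ 2 * ‖c‖ * s / (s - ‖w‖ - ‖c‖) ^ 2 *
        Real.circleAverage (fun z ↦ |Real.log ‖f z‖|) 0 s := abs_circleAverage_mul_le hint hkernel
    _ ≤ 2 * ‖c‖ * s / (s - ‖w‖ - ‖c‖) ^ 2 * (2 * (nevT f s + logPlus (1 / ‖f 0‖))) := by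
      gcongr
      exact circleAverage_abs_log_norm_le hs0 hf h0 hf0
    _ = _ := by ring

lemma circleAverage_abs_S1Term_eq (f : ℂ → ℂ) (c : ℂ) (r s : ℝ) :
    Real.circleAverage (fun w ↦ |S1Term f c s w|) 0 r =
      (2 * Real.pi)⁻¹ * ∫ φ in (0:ℝ)..(2 * Real.pi),
        |(2 * Real.pi)⁻¹ * ∫ θ in (0:ℝ)..(2 * Real.pi),
          Real.log ‖f (circ s θ)‖ *
            (2 * c * s * Complex.exp (θ * Complex.I) /
              ((circ s θ - circ r φ - c) * (circ s θ - circ r φ))).re| := by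
  simp only [S1Term, Real.circleAverage_def, circ, circleMap_zero, smul_eq_mul, mul_assoc]

theorem S1_term_bound_general {f : ℂ → ℂ} {r s : ℝ}
    (hf : MeromorphicOn f (closedBall 0 s)) (h0 : AnalyticAt ℂ f 0) (hf0 : f 0 ≠ 0) (c : ℂ)
    (hr : 0 ≤ r) (hs : r + ‖c‖ < s) :
    (2 * Real.pi)⁻¹ * ∫ φ in (0:ℝ)..(2 * Real.pi),
        |(2 * Real.pi)⁻¹ * ∫ θ in (0:ℝ)..(2 * Real.pi),
          Real.log ‖f (circ s θ)‖ *
            (2 * c * s * Complex.exp (θ * Complex.I) /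
              ((circ s θ - circ r φ - c) * (circ s θ - circ r φ))).re| ≤
      4 * ‖c‖ * s / (s - r - ‖c‖) ^ 2 * (nevT f s + logPlus (1 / ‖f 0‖)) := by
  rw [← circleAverage_abs_S1Term_eq]
  have hS1 : ∀ w ∈ sphere (0 : ℂ) |r|, |(|S1Term f c s w|)| ≤
      4 * ‖c‖ * s / (s - r - ‖c‖) ^ 2 * (nevT f s + logPlus (1 / ‖f 0‖)) := by
    intro w hw
    obtain rfl : ‖w‖ = r := by simpa [abs_of_nonneg hr] using hw
    rw [abs_abs]
    exact abs_S1Term_le hf h0 hf0 hs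
  simpa [Real.circleAverage_const] using
    (le_abs_self _).trans (abs_circleAverage_mul_le (circleIntegrable_const 1 0 r) hS1)

/-- Bound on the `S₁` term from the differenced Poisson–Jensen formula: for `f`
meromorphic with `f(0) ≠ 0, ∞`, `c ∈ ℂ`, `r ≥ 1` and `s > r + |c|`,
`(1/2π) ∫₀^{2π} |(1/2π) ∫₀^{2π} log|f(se^{iθ})| Re(2cse^{iθ}/((se^{iθ}−re^{iφ}−c)(se^{iθ}−re^{iφ}))) dθ| dφ
  ≤ (4|c|s/(s−r−|c|)²) (T(s,f) + log⁺(1/|f(0)|))`. -/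
theorem S1_term_bound (f : ℂ → ℂ) (hf : MeromorphicOn f Set.univ)
    (h0 : AnalyticAt ℂ f 0) (hf0 : f 0 ≠ 0) (c : ℂ) (r s : ℝ)
    (hr : 1 ≤ r) (hs : r + ‖c‖ < s) :
    (2 * Real.pi)⁻¹ * ∫ φ in (0:ℝ)..(2 * Real.pi),
        |(2 * Real.pi)⁻¹ * ∫ θ in (0:ℝ)..(2 * Real.pi),
          Real.log ‖f (circ s θ)‖ *
            (2 * c * s * Complex.exp (θ * Complex.I) /
              ((circ s θ - circ r φ - c) * (circ s θ - circ r φ))).re| ≤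
      4 * ‖c‖ * s / (s - r - ‖c‖) ^ 2 * (nevT f s + logPlus (1 / ‖f 0‖)) :=
  S1_term_bound_general (hf.mono_set (Set.subset_univ _)) h0 hf0 c (zero_le_one.trans hr) hs
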